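/- Fix a positive integer k. Let G = (V,D,μ) be a multigraph with multiplicities in which every μ(d) is an integer multiple of k, and let G′ = (V,D,μ′) where μ′(d) = μ(d)/k for each d ∈ D. Then T(G; −i cot(π/4k), e^{iπ/2k}) = ( √2 · e^{iπ(1−k)/(4k)} · sin(π/4k) )^{−r(G)} · T(G′; −i, i). -/

import Mathlib

/-!
For `x ≠ 1` and `y ≠ 1`, the Tutte polynomial is `(x - 1) ^ r(G)` times the multivariate Tutte
polynomial `∑_A q ^ (-r(A)) ∏_{e ∈ A} v_e` with `q = (x - 1) (y - 1)` and `v_e = y - 1`. A class of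
`m` parallel edges of weight `y - 1` can be replaced by a single edge of weight `y ^ m - 1`, so for
fixed `q` only the numbers `y ^ μ(d)` matter, and `y ^ μ(d) = (y ^ k) ^ (μ(d) / k)`. Thus
`T(G; x, y)` and `T(G'; x', y ^ k)` differ by the factor `((x - 1) / (x' - 1)) ^ r(G)` whenever
`(x - 1) (y - 1) = (x' - 1) (y ^ k - 1)`. All points `(-i cot θ, e ^ (2iθ))` lie on the hyperbola
`(x - 1) (y - 1) = 2`, and `y ↦ y ^ k` replaces `θ` by `k θ`; the theorem is the case `k θ = π / 4`.
-/

open scoped Classical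

noncomputable section

/-- A multigraph is encoded by a map `ε : E → Sym2 V` assigning to each edge index its
unordered pair of endpoints.  `graphOf ε A` is the simple graph on `V` whose edges are the
endpoint pairs of the edges in `A`. -/
def graphOf {V E : Type*} (ε : E → Sym2 V) (A : Set E) : SimpleGraph V :=
  SimpleGraph.fromEdgeSet (ε '' A)

/-- Number of connected components of the graph `(V, ε(A))` (isolated vertices count). -/
def kappa {V E : Type*} (ε : E → Sym2 V) (A : Set E) : ℕ :=
  Nat.card (graphOf ε A).ConnectedComponent

/-- Rank function `r(A) = |V| − κ(A)`. -/
def rk {V E : Type*} (ε : E → Sym2 V) (A : Set E) : ℕ :=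
  Nat.card V - kappa ε A

/-- Tutte polynomial of a multigraph, evaluated at `(x, y) ∈ ℂ²`:
`T(G;x,y) = Σ_{A ⊆ E} (x−1)^{r(E)−r(A)} (y−1)^{|A|−r(A)}`. -/
def tutte {V E : Type*} (ε : E → Sym2 V) (x y : ℂ) : ℂ :=
  ∑ᶠ A : Set E,
    (x - 1) ^ (rk ε Set.univ - rk ε A) * (y - 1) ^ (A.ncard - rk ε A)

/-- The edge index set of the multigraph determined by a multigraph with multiplicities
`(V, D, μ)`: one copy `Fin (μ d)` of each underlying pair `d ∈ D`. -/
def multiE {V : Type*} (D : Finset (Sym2 V)) (μ : Sym2 V → ℕ) : Type _ :=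
  Σ d : D, Fin (μ d.1)

/-- The endpoint map of the multigraph determined by `(V, D, μ)`. -/
def multiEps {V : Type*} (D : Finset (Sym2 V)) (μ : Sym2 V → ℕ) :
    multiE D μ → Sym2 V :=
  fun p => p.1.1

section Rank

variable {V E D : Type*}

lemma card_le_card_connectedComponent_add_ncard_edgeSet [Finite V] (G : SimpleGraph V) :
    Nat.card V ≤ Nat.card G.ConnectedComponent + G.edgeSet.ncard := by
  have := Fintype.ofFinite G.ConnectedComponent
  let edgeOf : (Σ c : G.ConnectedComponent, c.toSimpleGraph.edgeSet) → G.edgeSet :=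
    fun e => ⟨e.2.1.map Subtype.val, e.1.toSimpleGraph_hom.map_mem_edgeSet e.2.2⟩
  have edgeOf_injective : edgeOf.Injective := by
    rintro ⟨c, ⟨e, he⟩⟩ ⟨c', ⟨e', he'⟩⟩ heq
    have hmap : e.map Subtype.val = e'.map Subtype.val := congrArg Subtype.val heq
    obtain rfl : c = c' := by
      induction e with | _ u w
      obtain ⟨u', -, hu'⟩ :=
        Sym2.mem_map.1 (show ↑u ∈ e'.map Subtype.val from hmap ▸ Sym2.mem_mk_left _ _)
      exact SimpleGraph.ConnectedComponent.eq_of_common_vertex u.2 (hu' ▸ u'.2 : ↑u ∈ c'.supp)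
    obtain rfl := Sym2.map.injective Subtype.val_injective hmap
    rfl
  calc Nat.card V
      = ∑ c : G.ConnectedComponent, Nat.card c := by
        rw [← Nat.card_sigma]
        exact Nat.card_congr (Equiv.sigmaFiberEquiv G.connectedComponentMk).symm
    _ ≤ ∑ c : G.ConnectedComponent, (Nat.card c.toSimpleGraph.edgeSet + 1) :=
        Finset.sum_le_sum fun c _ =>
          c.connected_toSimpleGraph.card_vert_le_card_edgeSet_add_one
    _ = Nat.card G.ConnectedComponent +
          Nat.card (Σ c : G.ConnectedComponent, c.toSimpleGraph.edgeSet) := by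
        rw [Finset.sum_add_distrib, ← Nat.card_sigma, Finset.sum_const, smul_eq_mul, mul_one,
          Finset.card_univ, ← Nat.card_eq_fintype_card, add_comm]
    _ ≤ Nat.card G.ConnectedComponent + G.edgeSet.ncard :=
        Nat.add_le_add_left (Nat.card_le_card_of_injective edgeOf edgeOf_injective) _

lemma rk_le_ncard [Finite V] (ε : E → Sym2 V) {A : Set E} (hA : A.Finite) :
    rk ε A ≤ A.ncard := by
  have hedges : (graphOf ε A).edgeSet.ncard ≤ A.ncard := by
    rw [graphOf, SimpleGraph.edgeSet_fromEdgeSet]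
    exact (Set.ncard_le_ncard Set.sdiff_subset (hA.image ε)).trans (Set.ncard_image_le hA)
  have := card_le_card_connectedComponent_add_ncard_edgeSet (graphOf ε A)
  rw [rk, kappa]
  lia

lemma rk_mono [Finite V] (ε : E → Sym2 V) : Monotone (rk ε) := fun _ _ h =>
  Nat.sub_le_sub_left (SimpleGraph.ConnectedComponent.card_le_card_of_le
    (SimpleGraph.fromEdgeSet_mono (Set.image_mono h))) _

lemma rk_eq_of_image_eq {ε : E → Sym2 V} {η : D → Sym2 V} {A : Set E} {B : Set D}
    (h : ε '' A = η '' B) : rk ε A = rk η B := by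
  rw [rk, rk, kappa, kappa, graphOf, graphOf, h]

end Rank

section MultivariateTutte

variable {V E D K : Type*} [Fintype E] [Field K]

/-- Sokal's multivariate Tutte polynomial `∑_A q^{-r(A)} ∏_{e ∈ A} v_e`, in the rank normalization:
it differs by the factor `q^{|V|}` from the partition function with weights `q^{κ(A)}`.
At `q = 0` the convention `0⁻¹ = 0` leaves only the sets `A` of rank zero. -/
def multivariateTutte (ε : E → Sym2 V) (q : K) (v : E → K) : K :=
  ∑ A : Finset E, q⁻¹ ^ rk ε A * ∏ e ∈ A, v e

lemma tutte_eq_pow_mul_multivariateTutte [Finite V] (ε : E → Sym2 V) {x y : ℂ} (hx : x ≠ 1)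
    (hy : y ≠ 1) :
    tutte ε x y =
      (x - 1) ^ rk ε Set.univ * multivariateTutte ε ((x - 1) * (y - 1)) fun _ => y - 1 := by
  rw [tutte, finsum_eq_sum_of_fintype, ← Fintype.finsetEquivSet.sum_comp, multivariateTutte,
    Finset.mul_sum]
  refine Finset.sum_congr rfl fun A _ => ?_
  rw [Fintype.finsetEquivSet_apply,
    pow_sub₀ _ (sub_ne_zero.2 hx) (rk_mono ε (Set.subset_univ _)),
    pow_sub₀ _ (sub_ne_zero.2 hy) (rk_le_ncard ε A.finite_toSet), Set.ncard_coe_finset,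
    Finset.prod_const, mul_inv, mul_pow, inv_pow, inv_pow]
  ring

/-- Both sides have the same sum over all `T ⊆ S`, namely `∏_{f e ∈ S} (1 + v e)`. -/
lemma sum_prod_filter_image_eq [DecidableEq D] {R : Type*} [CommRing R] (f : E → D) (v : E → R)
    (S : Finset D) :
    ∑ A : Finset E with A.image f = S, ∏ e ∈ A, v e =
      ∏ d ∈ S, (∏ e with f e = d, (1 + v e) - 1) := by
  induction S using Finset.strongInduction with | H S ih
  have sum_powerset_eq :
      ∑ T ∈ S.powerset, ∑ A : Finset E with A.image f = T, ∏ e ∈ A, v e =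
        ∑ T ∈ S.powerset, ∏ d ∈ T, (∏ e with f e = d, (1 + v e) - 1) := by
    have hfilter : ({A | A.image f ∈ S.powerset} : Finset (Finset E)) =
        ({e | f e ∈ S} : Finset E).powerset := by
      ext A
      simp [Finset.subset_iff]
    rw [Finset.sum_fiberwise_eq_sum_filter, hfilter, ← Finset.prod_one_add,
      ← Finset.prod_fiberwise_eq_prod_filter, ← Finset.prod_one_add]
    simp only [add_sub_cancel]
  rw [← Finset.add_sum_erase _ _ (Finset.mem_powerset_self S),
    ← Finset.add_sum_erase _ _ (Finset.mem_powerset_self S)] at sum_powerset_eq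
  have sum_ssubsets_eq := Finset.sum_congr rfl fun T hT => ih T (Finset.mem_ssubsets.1 hT)
  exact add_right_cancel (sum_powerset_eq.trans (congrArg _ sum_ssubsets_eq.symm))

/-- Parallel reduction: edges in the same fibre of `f` have the same endpoints under `η ∘ f`. -/
lemma multivariateTutte_comp [Fintype D] [DecidableEq D] (η : D → Sym2 V) (f : E → D) (q : K)
    (v : E → K) :
    multivariateTutte (η ∘ f) q v =
      multivariateTutte η q fun d => ∏ e with f e = d, (1 + v e) - 1 := by
  rw [multivariateTutte, ← Finset.sum_fiberwise _ fun A => A.image f, multivariateTutte]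
  refine Finset.sum_congr rfl fun S _ => ?_
  rw [← sum_prod_filter_image_eq, Finset.mul_sum]
  refine Finset.sum_congr rfl fun A hA => ?_
  obtain rfl : A.image f = S := (Finset.mem_filter.1 hA).2
  rw [rk_eq_of_image_eq (Set.image_comp η f A), Finset.coe_image]

end MultivariateTutte

section Thickening

variable {V : Type*} (D : Finset (Sym2 V)) (μ : Sym2 V → ℕ)

instance : Fintype (multiE D μ) :=
  inferInstanceAs (Fintype (Σ d : D, Fin (μ d.1)))

lemma range_multiEps : Set.range (multiEps D μ) = {d | d ∈ D ∧ μ d ≠ 0} := by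
  ext d
  constructor
  · rintro ⟨⟨d, i⟩, rfl⟩
    exact ⟨d.2, i.pos.ne'⟩
  · rintro ⟨hd, hμ⟩
    exact ⟨⟨⟨d, hd⟩, ⟨0, Nat.pos_of_ne_zero hμ⟩⟩, rfl⟩

lemma multivariateTutte_multiEps_const {K : Type*} [Field K] (q v : K) :
    multivariateTutte (multiEps D μ) q (fun _ => v) =
      multivariateTutte (Subtype.val : D → Sym2 V) q fun d => (1 + v) ^ μ d - 1 := by
  have hfibre (d : D) : ∏ e : multiE D μ with e.1 = d, (1 + v) = (1 + v) ^ μ d := by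
    rw [Finset.prod_filter]
    refine (Fintype.prod_sigma _).trans ((Fintype.prod_eq_single d fun d' h => ?_).trans ?_)
    · simp [h]
    · simp
  simp only [← hfibre]
  exact multivariateTutte_comp (E := multiE D μ) Subtype.val (fun e => e.1) q fun _ => v

variable {D μ} {k : ℕ}

lemma rk_univ_multiEps_div (hk : k ≠ 0) (hdiv : ∀ d ∈ D, k ∣ μ d) :
    rk (multiEps D fun d => μ d / k) Set.univ = rk (multiEps D μ) Set.univ := by
  refine rk_eq_of_image_eq ?_
  rw [Set.image_univ, Set.image_univ, range_multiEps, range_multiEps]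
  ext d
  exact and_congr_right fun hd => by
    rw [Nat.div_ne_zero_iff_of_dvd (hdiv d hd), and_iff_left hk]

theorem tutte_multiEps_eq_pow_mul_tutte_div [Finite V] (hdiv : ∀ d ∈ D, k ∣ μ d) {x y x' : ℂ}
    (hx : x ≠ 1) (hy : y ^ k ≠ 1) (hxy : (x - 1) * (y - 1) = (x' - 1) * (y ^ k - 1)) :
    tutte (multiEps D μ) x y =
      ((x - 1) / (x' - 1)) ^ rk (multiEps D μ) Set.univ *
        tutte (multiEps D fun d => μ d / k) x' (y ^ k) := by
  have hk : k ≠ 0 := by rintro rfl; exact hy (pow_zero y)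
  have hy₁ : y ≠ 1 := by rintro rfl; exact hy (one_pow k)
  have hx' : x' ≠ 1 := by
    rintro rfl
    rw [sub_self, zero_mul] at hxy
    exact mul_ne_zero (sub_ne_zero.2 hx) (sub_ne_zero.2 hy₁) hxy
  have hweights (d : D) : y ^ μ d = (y ^ k) ^ (μ d / k) := by
    rw [← pow_mul, Nat.mul_div_cancel' (hdiv d d.2)]
  rw [tutte_eq_pow_mul_multivariateTutte _ hx hy₁, tutte_eq_pow_mul_multivariateTutte _ hx' hy,
    rk_univ_multiEps_div hk hdiv, multivariateTutte_multiEps_const,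
    multivariateTutte_multiEps_const, ← mul_assoc, ← mul_pow,
    div_mul_cancel₀ _ (sub_ne_zero.2 hx'), hxy]
  simp only [add_sub_cancel, hweights]

end Thickening

section Trigonometry

open Complex

lemma neg_I_mul_cot_sub_one {θ : ℂ} (hθ : sin θ ≠ 0) :
    -I * cot θ - 1 = -I * exp (-(θ * I)) / sin θ := by
  rw [← neg_mul, exp_mul_I, cos_neg, sin_neg, cot]
  field_simp
  linear_combination -sin θ * I_sq

lemma exp_two_mul_mul_I_sub_one (θ : ℂ) :
    exp (2 * θ * I) - 1 = 2 * I * exp (θ * I) * sin θ := by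
  rw [mul_assoc, two_mul, exp_add, exp_mul_I]
  linear_combination sin_sq_add_cos_sq θ - sin θ ^ 2 * I_sq

lemma neg_I_mul_cot_sub_one_mul_exp_sub_one {θ : ℂ} (hθ : sin θ ≠ 0) :
    (-I * cot θ - 1) * (exp (2 * θ * I) - 1) = 2 := by
  rw [neg_I_mul_cot_sub_one hθ, exp_two_mul_mul_I_sub_one, exp_neg]
  field_simp
  linear_combination -I_sq

lemma neg_I_mul_cot_sub_one_div {θ φ : ℂ} (hθ : sin θ ≠ 0) (hφ : sin φ ≠ 0) :
    (-I * cot θ - 1) / (-I * cot φ - 1) = (exp ((θ - φ) * I) * sin θ / sin φ)⁻¹ := by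
  rw [neg_I_mul_cot_sub_one hθ, neg_I_mul_cot_sub_one hφ, sub_mul, exp_sub, exp_neg, exp_neg]
  field_simp

lemma sin_pi_div_four : sin (Real.pi / 4) = (Real.sqrt 2 : ℂ)⁻¹ := by
  have h : Real.sin (Real.pi / 4) = (Real.sqrt 2)⁻¹ := by
    rw [Real.sin_pi_div_four, Real.sqrt_div_self]
  exact_mod_cast congrArg ofReal h

lemma cot_pi_div_four : cot (Real.pi / 4) = 1 := by
  have h : Real.cot (Real.pi / 4) = 1 := by
    rw [← inv_inj, Real.cot_inv_eq_tan, Real.tan_pi_div_four, inv_one]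
  exact_mod_cast congrArg ofReal h

lemma sin_ne_zero_of_sin_natCast_mul_ne_zero {k : ℕ} {θ : ℂ} (h : sin (k * θ) ≠ 0) :
    sin θ ≠ 0 := by
  contrapose! h
  obtain ⟨n, rfl⟩ := sin_eq_zero_iff.1 h
  exact sin_eq_zero_iff.2 ⟨k * n, by push_cast; ring⟩

end Trigonometry

theorem statement13_general {V : Type*} [Finite V] {k : ℕ} {D : Finset (Sym2 V)}
    {μ : Sym2 V → ℕ} (hdiv : ∀ d ∈ D, k ∣ μ d) {θ : ℂ} (hkθ : Complex.sin (k * θ) ≠ 0) :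
    tutte (multiEps D μ) (-Complex.I * Complex.cot θ) (Complex.exp (2 * θ * Complex.I)) =
      (Complex.exp ((θ - k * θ) * Complex.I) * Complex.sin θ / Complex.sin (k * θ)) ^
          (-(rk (multiEps D μ) Set.univ : ℤ)) *
        tutte (multiEps D (fun d => μ d / k)) (-Complex.I * Complex.cot (k * θ))
          (Complex.exp (2 * (k * θ) * Complex.I)) := by
  have hθ := sin_ne_zero_of_sin_natCast_mul_ne_zero hkθ
  have hyperbola := neg_I_mul_cot_sub_one_mul_exp_sub_one hθ
  have hyperbola_mul := neg_I_mul_cot_sub_one_mul_exp_sub_one hkθ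
  have hpow : Complex.exp (2 * (k * θ) * Complex.I) = Complex.exp (2 * θ * Complex.I) ^ k := by
    rw [← Complex.exp_nat_mul]
    ring_nf
  rw [hpow] at hyperbola_mul ⊢
  rw [tutte_multiEps_eq_pow_mul_tutte_div hdiv
    (sub_ne_zero.1 (left_ne_zero_of_mul (hyperbola ▸ two_ne_zero)))
    (sub_ne_zero.1 (right_ne_zero_of_mul (hyperbola_mul ▸ two_ne_zero)))
    (hyperbola.trans hyperbola_mul.symm),
    neg_I_mul_cot_sub_one_div hθ hkθ, zpow_neg, zpow_natCast, inv_pow]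

/-- If every multiplicity is a multiple of `k` and `G′` has multiplicities
`μ d / k`, then `T(G; −i cot(π/4k), e^{iπ/2k}) = (√2 e^{iπ(1−k)/(4k)} sin(π/4k))^{−r(G)} ·
T(G′; −i, i)`. -/
theorem statement13 {V : Type*} [Finite V] (k : ℕ) (hk : 0 < k)
    (D : Finset (Sym2 V)) (μ : Sym2 V → ℕ) (hdiv : ∀ d, k ∣ μ d) :
    tutte (multiEps D μ)
        (-Complex.I *
          ((Real.cos (Real.pi / (4 * k)) : ℂ) / (Real.sin (Real.pi / (4 * k)) : ℂ)))
        (Complex.exp (Complex.I * ((Real.pi : ℂ) / (2 * k)))) =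
      ((Real.sqrt 2 : ℂ) *
            Complex.exp (Complex.I * ((Real.pi : ℂ) * (1 - (k : ℂ)) / (4 * k))) *
            (Real.sin (Real.pi / (4 * k)) : ℂ)) ^
          (-(rk (multiEps D μ) Set.univ : ℤ)) *
        tutte (multiEps D (fun d => μ d / k)) (-Complex.I) Complex.I := by
  have hk₀ : (k : ℂ) ≠ 0 := Nat.cast_ne_zero.2 hk.ne'
  have hkθ : (k : ℂ) * (Real.pi / (4 * k)) = Real.pi / 4 := by field_simp
  have hangle : 2 * (Real.pi / 4 : ℂ) * Complex.I = Real.pi / 2 * Complex.I := by ring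
  have h := statement13_general (θ := Real.pi / (4 * k)) (fun d (_ : d ∈ D) => hdiv d)
    (by simp [hkθ, sin_pi_div_four])
  rw [hkθ, hangle, Complex.exp_pi_div_two_mul_I, sin_pi_div_four, cot_pi_div_four, mul_one,
    div_inv_eq_mul] at h
  convert h using 3
  · simp [Complex.cot]
  · ring_nf
  · push_cast
    field_simp
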